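/- Let f_1,…,f_n be MRF (submodular dichotomous) valuations on a finite item set M, let σ be a priority order, and let A be a non-redundant σ-Lorenz dominating allocation. Then no agent envies an agent of lower priority: for all agents u, v with σ(u) < σ(v), f_u(A_u) ≥ f_u(A_v). -/

import Mathlib

open Finset
open scoped Classical

variable {n : ℕ} {I : Type*} [DecidableEq I] [Fintype I]

/-- An allocation assigns pairwise disjoint bundles of items to the agents
(items may remain unallocated). -/
def IsAllocation (A : Fin n → Finset I) : Prop :=
  ∀ i j : Fin n, i ≠ j → Disjoint (A i) (A j)

/-- The vector of utilities of an allocation under a profile of valuations. -/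
def util {α : Type*} (f : Fin n → Finset I → α) (A : Fin n → Finset I) : Fin n → α :=
  fun i => f i (A i)

/-- The entries of the vector `u`, sorted in nondecreasing order. -/
noncomputable def sortedVec {α : Type*} [LinearOrder α] (u : Fin n → α) : List α :=
  (Finset.univ.val.map u).sort (· ≤ ·)

/-- `u` Lorenz-dominates `v`: for each `k`, the sum of the `k` smallest entries of `u`
is at least the sum of the `k` smallest entries of `v`. -/
def LorenzGE {α : Type*} [LinearOrder α] [AddCommMonoid α] (u v : Fin n → α) : Prop :=
  ∀ k : ℕ, ((sortedVec v).take k).sum ≤ ((sortedVec u).take k).sum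

/-- A matroid rank function: a normalized submodular valuation with dichotomous marginals. -/
structure IsMRF (f : Finset I → ℕ) : Prop where
  empty : f ∅ = 0
  submod : ∀ S T : Finset I, S ⊆ T → ∀ a : I,
      f (insert a T) + f S ≤ f (insert a S) + f T
  dichot : ∀ (S : Finset I) (a : I), f (insert a S) = f S ∨ f (insert a S) = f S + 1

/-- Non-redundancy: removing any item from any agent's bundle strictly decreases its value. -/
def NonRedundant (f : Fin n → Finset I → ℕ) (A : Fin n → Finset I) : Prop :=
  ∀ i : Fin n, ∀ a ∈ A i, f i ((A i).erase a) < f i (A i)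

/-- A Lorenz dominating allocation. -/
def LorenzDominating (f : Fin n → Finset I → ℕ) (A : Fin n → Finset I) : Prop :=
  ∀ B : Fin n → Finset I, IsAllocation B → LorenzGE (util f A) (util f B)

/-- The σ-perturbed utilities: agent `i` gets `f i (A i) + σ(i)/n²`, where the priority
`σ(i)` ranges over `{1,…,n}`. -/
noncomputable def pUtil (σ : Equiv.Perm (Fin n)) (f : Fin n → Finset I → ℕ)
    (A : Fin n → Finset I) : Fin n → ℝ :=
  fun i => (f i (A i) : ℝ) + (((σ i : ℕ) : ℝ) + 1) / (n : ℝ) ^ 2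

/-- A σ-Lorenz dominating allocation. -/
def SigmaLorenzDom (σ : Equiv.Perm (Fin n)) (f : Fin n → Finset I → ℕ)
    (A : Fin n → Finset I) : Prop :=
  ∀ B : Fin n → Finset I, IsAllocation B → LorenzGE (pUtil σ f A) (pUtil σ f B)

/-- Restriction of a valuation to a subset `D` of the items. -/
def restrictVal (f : Finset I → ℕ) (D : Finset I) : Finset I → ℕ := fun S => f (S ∩ D)

/-- A partition of all the items into `n` (possibly empty) bundles. -/
def IsPartition (P : Fin n → Finset I) : Prop :=
  (∀ i j : Fin n, i ≠ j → Disjoint (P i) (P j)) ∧ ∀ a : I, ∃ j, a ∈ P j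

/-- An XOS valuation: the pointwise maximum of a finite nonempty family of
nonnegative additive valuations. -/
def IsXOS (f : Finset I → ℝ) : Prop :=
  ∃ (k : ℕ) (w : Fin (k + 1) → I → ℝ),
    (∀ t a, 0 ≤ w t a) ∧
    ∀ S : Finset I, f S = Finset.univ.sup' Finset.univ_nonempty (fun t => ∑ a ∈ S, w t a)

/-- A dichotomous valuation (real-valued version). -/
def IsDichotomousR (f : Finset I → ℝ) : Prop :=
  ∀ (S : Finset I) (a : I), f (insert a S) = f S ∨ f (insert a S) = f S + 1

/-- Envy-freeness up to one good. -/
def EF1 (f : Fin n → Finset I → ℝ) (A : Fin n → Finset I) : Prop :=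
  ∀ i j : Fin n, f i (A j) ≤ f i (A i) ∨ ∃ e ∈ A j, f i ((A j).erase e) ≤ f i (A i)

/-- The maximum welfare attainable by a set `S` of agents. -/
noncomputable def maxWelfare (f : Fin n → Finset I → ℕ) (S : Finset (Fin n)) : ℕ :=
  Finset.sup (Finset.univ.filter fun B : Fin n → Finset I => IsAllocation B)
    (fun B => ∑ j ∈ S, f j (B j))

/-- An allocation extended with index `none` for the set of unallocated items. -/
def extAlloc (A : Fin n → Finset I) : Option (Fin n) → Finset I
  | none => Finset.univ \ Finset.univ.biUnion A
  | some i => A i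

/-- Truncating the entries of a list at `t` sums to at most the sum of a prefix plus `t` for
each remaining entry. -/
theorem List.sum_map_min_le_sum_take_add (t : ℝ) (l : List ℝ) (k : ℕ) :
    (l.map (min · t)).sum ≤ (l.take k).sum + ((l.length - k : ℕ) : ℝ) * t := by
  induction l generalizing k with
  | nil => simp
  | cons a l ih =>
    cases k with
    | zero =>
      have h := ih 0
      have := min_le_right a t
      simp only [List.map_cons, List.sum_cons, List.take_zero, List.sum_nil, List.length_cons,
        Nat.sub_zero] at h ⊢
      push_cast
      linarith
    | succ k =>
      have h := ih k
      have := min_le_left a t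
      simp only [List.map_cons, List.sum_cons, List.take_succ_cons, List.length_cons,
        Nat.add_sub_add_right]
      linarith

/-- For a sorted list, the bound of `List.sum_map_min_le_sum_take_add` is attained. -/
theorem List.exists_sum_map_min_eq_sum_take_add (t : ℝ) (l : List ℝ)
    (hl : l.Pairwise (· ≤ ·)) :
    ∃ k, (l.map (min · t)).sum = (l.take k).sum + ((l.length - k : ℕ) : ℝ) * t := by
  induction l with
  | nil => exact ⟨0, by simp⟩
  | cons a l ih =>
    rw [List.pairwise_cons] at hl
    rcases le_total a t with h | h
    · obtain ⟨k, hk⟩ := ih hl.2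
      refine ⟨k + 1, ?_⟩
      simp only [List.map_cons, List.sum_cons, List.take_succ_cons, List.length_cons,
        Nat.add_sub_add_right, min_eq_left h]
      linarith
    · refine ⟨0, ?_⟩
      have hmap : (a :: l).map (min · t) = List.replicate (a :: l).length t := by
        refine List.eq_replicate_iff.2 ⟨by simp, fun b hb => ?_⟩
        obtain ⟨c, hc, rfl⟩ := List.mem_map.1 hb
        refine min_eq_right ?_
        rcases List.mem_cons.1 hc with rfl | hc
        · exact h
        · exact h.trans (hl.1 c hc)
      rw [hmap]
      simp

theorem sum_map_sortedVec {n : ℕ} (g : ℝ → ℝ) (p : Fin n → ℝ) :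
    ((sortedVec p).map g).sum = ∑ i, g (p i) := by
  rw [← Multiset.sum_coe, ← Multiset.map_coe, sortedVec, Multiset.sort_eq, Multiset.map_map]
  rfl

theorem length_sortedVec {n : ℕ} (p : Fin n → ℝ) : (sortedVec p).length = n := by
  simp [sortedVec]

/-- Lorenz domination implies domination of all truncated sums. -/
theorem LorenzGE.sum_min_le {n : ℕ} {p q : Fin n → ℝ} (h : LorenzGE p q) (t : ℝ) :
    ∑ i, min (q i) t ≤ ∑ i, min (p i) t := by
  obtain ⟨k, hk⟩ := List.exists_sum_map_min_eq_sum_take_add t (sortedVec p)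
    (Multiset.pairwise_sort _ _)
  have hq := List.sum_map_min_le_sum_take_add t (sortedVec q) k
  rw [sum_map_sortedVec (min · t), length_sortedVec] at hk hq
  have := h k
  linarith

/-- A vector does not Lorenz-dominate one that differs from it only at `u` and `v` and whose entries
there both exceed the old entry at `u`. -/
theorem not_lorenzGE_of_transfer {n : ℕ} {p q : Fin n → ℝ} {u v : Fin n}
    (hu : p u < q u) (hv : p u < q v) (hrest : ∀ i, i ≠ u → i ≠ v → q i = p i) :
    ¬ LorenzGE p q := by
  intro h
  have hsum := h.sum_min_le (min (q u) (q v))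
  set t := min (q u) (q v)
  have hut : p u < t := lt_min hu hv
  refine hsum.not_gt (Finset.sum_lt_sum (fun i _ => ?_) ⟨u, Finset.mem_univ u, ?_⟩)
  · by_cases hiu : i = u
    · subst hiu
      rw [min_eq_right (min_le_left (q i) (q v)), min_eq_left hut.le]
      exact hut.le
    · by_cases hiv : i = v
      · subst hiv
        rw [min_eq_right (min_le_right (q u) (q i))]
        exact min_le_right _ _
      · rw [hrest i hiu hiv]
  · rw [min_eq_right (min_le_left (q u) (q v)), min_eq_left hut.le]
    exact hut

namespace IsMRF

variable {J : Type*} [DecidableEq J] {g : Finset J → ℕ}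

theorem le_insert (hg : IsMRF g) (S : Finset J) (a : J) : g S ≤ g (insert a S) := by
  rcases hg.dichot S a with h | h <;> omega

theorem le_union (hg : IsMRF g) (S T : Finset J) : g S ≤ g (T ∪ S) := by
  induction T using Finset.induction_on with
  | empty => simp
  | insert a T _ ih =>
    rw [Finset.insert_union]
    exact ih.trans (hg.le_insert _ a)

theorem le_card (hg : IsMRF g) (S : Finset J) : g S ≤ S.card := by
  induction S using Finset.induction_on with
  | empty => simp [hg.empty]
  | insert a S ha ih =>
    rw [Finset.card_insert_of_notMem ha]
    rcases hg.dichot S a with h | h <;> omega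

/-- A set all of whose elements are non-redundant is independent. -/
theorem eq_card_of_forall_erase_lt (hg : IsMRF g) (S : Finset J)
    (h : ∀ a ∈ S, g (S.erase a) < g S) : g S = S.card := by
  have key : ∀ T : Finset J, T ⊆ S → g T = T.card := by
    intro T
    induction T using Finset.induction_on with
    | empty => simp [hg.empty]
    | insert a T ha ih =>
      intro hT
      have haS : a ∈ S := hT (Finset.mem_insert_self a T)
      have hTS : T ⊆ S := (Finset.subset_insert a T).trans hT
      have hsub := hg.submod T (S.erase a) (Finset.subset_erase.2 ⟨hTS, ha⟩) a
      rw [Finset.insert_erase haS] at hsub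
      have hlt := h a haS
      have hT' := ih hTS
      rw [Finset.card_insert_of_notMem ha]
      rcases hg.dichot T a with h' | h' <;> omega
  exact key S Finset.Subset.rfl

/-- If no element of `T` has positive marginal over `S`, neither has `T`. -/
theorem union_eq_of_forall_insert_eq (hg : IsMRF g) (S T : Finset J)
    (h : ∀ a ∈ T, g (insert a S) = g S) : g (T ∪ S) = g S := by
  induction T using Finset.induction_on with
  | empty => simp
  | insert a T _ ih =>
    have hT := ih fun b hb => h b (Finset.mem_insert_of_mem hb)
    have ha := h a (Finset.mem_insert_self a T)
    have hsub := hg.submod S (T ∪ S) Finset.subset_union_right a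
    have := hg.le_insert (T ∪ S) a
    rw [Finset.insert_union]
    omega

/-- The augmentation property: a bundle of larger value contains an item of positive marginal. -/
theorem exists_insert_eq_add_one (hg : IsMRF g) {S T : Finset J} (h : g S < g T) :
    ∃ a ∈ T, g (insert a S) = g S + 1 := by
  by_contra! hcon
  have hunion := hg.union_eq_of_forall_insert_eq S T
    fun a ha => (hg.dichot S a).resolve_right (hcon a ha)
  have := hg.le_union T S
  rw [Finset.union_comm] at this
  omega

end IsMRF

/-- Moving an item from one agent to another yields an allocation. -/
theorem IsAllocation.transfer {n : ℕ} {J : Type*} [DecidableEq J] {A : Fin n → Finset J}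
    (hA : IsAllocation A) {u v : Fin n} {a : J} (ha : a ∈ A v) :
    IsAllocation (Function.update (Function.update A v ((A v).erase a)) u (insert a (A u))) := by
  have hnot : ∀ i, i ≠ v → a ∉ A i := fun i hi hai => Finset.disjoint_left.1 (hA i v hi) hai ha
  have hmem : ∀ i b,
      b ∈ Function.update (Function.update A v ((A v).erase a)) u (insert a (A u)) i →
        (b = a ∧ i = u) ∨ (b ≠ a ∧ b ∈ A i) := by
    intro i b hb
    by_cases hiu : i = u
    · subst hiu
      rw [Function.update_self, Finset.mem_insert] at hb
      tauto
    · rw [Function.update_of_ne hiu] at hb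
      by_cases hiv : i = v
      · subst hiv
        rw [Function.update_self, Finset.mem_erase] at hb
        exact Or.inr hb
      · rw [Function.update_of_ne hiv] at hb
        exact Or.inr ⟨fun h => hnot i hiv (h ▸ hb), hb⟩
  intro i j hij
  refine Finset.disjoint_left.2 fun b hbi hbj => ?_
  rcases hmem i b hbi with ⟨hba, hi⟩ | ⟨hba, hi⟩ <;>
    rcases hmem j b hbj with ⟨hba', hj⟩ | ⟨hba', hj⟩
  · exact hij (hi.trans hj.symm)
  · exact hba' hba
  · exact hba hba'
  · exact Finset.disjoint_left.1 (hA i j hij) hi hj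

/-- In a non-redundant σ-Lorenz dominating allocation for MRF valuations, no agent
envies an agent of lower priority. -/
theorem PE_no_envy_towards_lower_priority
    {n : ℕ} {I : Type*} [DecidableEq I] [Fintype I]
    (σ : Equiv.Perm (Fin n))
    (f : Fin n → Finset I → ℕ) (hf : ∀ i, IsMRF (f i))
    (A : Fin n → Finset I) (hA : IsAllocation A)
    (hNR : NonRedundant f A) (hLD : SigmaLorenzDom σ f A)
    (u v : Fin n) (huv : σ u < σ v) :
    f u (A v) ≤ f u (A u) := by
  by_contra! henvy
  obtain ⟨a, hav, hau⟩ := (hf u).exists_insert_eq_add_one henvy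
  have hne : u ≠ v := fun h => huv.ne (congrArg σ h)
  have hn : 0 < (n : ℝ) := by exact_mod_cast u.pos
  have hcard := (hf v).eq_card_of_forall_erase_lt (A v) (hNR v)
  have hle := (hf u).le_card (A v)
  have herase : f v (A v) ≤ f v ((A v).erase a) + 1 := by
    have h := (hf v).dichot ((A v).erase a) a
    rw [Finset.insert_erase hav] at h
    omega
  have hv : f u (A u) ≤ f v ((A v).erase a) := by omega
  refine not_lorenzGE_of_transfer (u := u) (v := v) ?_ ?_ ?_
    (hLD _ (hA.transfer (u := u) hav))
  · simp only [pUtil, Function.update_self, hau]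
    push_cast
    linarith
  · simp only [pUtil, Function.update_of_ne hne.symm, Function.update_self]
    have hσ : ((σ u : ℕ) : ℝ) < ((σ v : ℕ) : ℝ) := by exact_mod_cast huv
    have hv_le : (f u (A u) : ℝ) ≤ f v ((A v).erase a) := by exact_mod_cast hv
    exact add_lt_add_of_le_of_lt hv_le (by gcongr)
  · intro i hiu hiv
    simp only [pUtil, Function.update_of_ne hiu, Function.update_of_ne hiv]
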